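/- For every α > 0 there exists a family of nonnegative real numbers f(k, n; d, ℓ), indexed by integers k ≥ 2, n ≥ k, a finite tree τ with decorations d: V_τ → ℕ_{>0} and ℓ: V_τ → ℕ, and depending only on α, k, n, τ, d and ℓ (in particular not on the structure of the seed), such that for every seed tree S of size k, every decorated tree τ = (τ, ℓ) and every n ≥ k: E[F_τ(T_n^S, {·} ⊆ S)] = Σ_{d: V_τ → ℕ_{>0}} f(k, n; d, ℓ)·D_{τ,d}(S). (The sum is finite since D_{τ,d}(S) = 0 for all but finitely many d.) -/

import Mathlib

/-! Only the degrees of the seed vertices enter the observable, and along a tuple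
`x : Fin r → Fin k` of distinct seed vertices these degrees form a Markov chain by themselves:
when the tree has `n` vertices and the degrees are `d`, the `u`-th one increases by `1` with
probability `(d u - 1 + α) / ((1 + α) n - 2)`. Hence the expectation of a function `h` of these
degrees after `m` steps is `degEval α k m h` evaluated at the degrees of `x` in the seed
(`integral_degrees`), where `degEval` iterates the one-step operator `degStep` and does not refer
to the seed at all. Summing over the embeddings `φ` of `τ` in `S` and grouping them by the
degrees `d` of their image gives the factorization, with `f` the absolute value of `degEval`
applied to `d ↦ ∏ [d u - 1]_{ℓ u}`. The absolute value is harmless: whenever `D_{τ,d}(S) ≠ 0`,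
the value is the expectation of a nonnegative variable.

The one-step formula requires the attachment weights to be nonnegative and to sum to `1`, which
holds for graphs with at least two vertices, no isolated vertex and total degree `2n - 2`; this
property (`Good`) holds for trees and is preserved by attaching a leaf. -/

open MeasureTheory Filter Asymptotics

noncomputable section

namespace AffinePA

instance (V : Type*) : MeasurableSpace (SimpleGraph V) := ⊤

/-- The degree of a vertex. -/
def degR {V : Type*} (G : SimpleGraph V) (v : V) : ℕ := Nat.card {w // G.Adj v w}

/-- The tree on `n+1` vertices obtained from `G` by attaching the new vertex to `u`. -/
def extendTree {n : ℕ} (G : SimpleGraph (Fin n)) (u : Fin n) : SimpleGraph (Fin (n + 1)) :=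
  SimpleGraph.fromRel fun a b =>
    (∃ a' b' : Fin n, a = Fin.castSucc a' ∧ b = Fin.castSucc b' ∧ G.Adj a' b') ∨
      (a = Fin.castSucc u ∧ b = Fin.last n)

/-- One step of the affine preferential attachment dynamics. -/
def stepMeasure (α : ℝ) {n : ℕ} (G : SimpleGraph (Fin n)) :
    Measure (SimpleGraph (Fin (n + 1))) :=
  ∑ u : Fin n,
    ENNReal.ofReal (((degR G u : ℝ) - 1 + α) / ((1 + α) * (n : ℝ) - 2)) •
      Measure.dirac (extendTree G u)

/-- The law of the α-PA tree with `m` added vertices, started from the seed `S`. -/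
def paLaw (α : ℝ) {k : ℕ} (S : SimpleGraph (Fin k)) :
    (m : ℕ) → Measure (SimpleGraph (Fin (k + m)))
  | 0 => Measure.dirac S
  | m + 1 => (paLaw α S m).bind (stepMeasure α)

/-- The weight `∏_u [deg_T(f u) - 1]_{ℓ u}` of a map `f`. -/
def embWeight {V W : Type*} [Fintype V] (T : SimpleGraph W) (ℓ : V → ℕ) (f : V → W) : ℝ :=
  ∏ u : V, ((degR T (f u) - 1).descFactorial (ℓ u) : ℝ)

/-- The observable `F_{(τ,ℓ)}(T)`. -/
def obsG {V W : Type*} [Fintype V] (τ : SimpleGraph V) (ℓ : V → ℕ) (T : SimpleGraph W) : ℝ :=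
  ∑ᶠ φ : τ ↪g T, embWeight T ℓ ⇑φ

/-- The weight `w(τ,ℓ)` of a decorated tree. -/
def weightG {V : Type*} [Fintype V] (τ : SimpleGraph V) (ℓ : V → ℕ) : ℕ :=
  if Fintype.card V ≤ 2 ∧ ∀ v, ℓ v = 0 then 1
  else (∑ v, ℓ v) + Nat.card {v // degR τ v = 1 ∧ ℓ v = 0}

/-- A decorated tree: a finite graph on `Fin n` with nonnegative integer decorations. -/
structure DecTree where
  n : ℕ
  tree : SimpleGraph (Fin n)
  dec : Fin n → ℕ

def DecTree.wt (τ : DecTree) : ℕ := weightG τ.tree τ.dec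

def DecTree.decSum (τ : DecTree) : ℕ := ∑ v, τ.dec v

def DecTree.obs (τ : DecTree) {W : Type*} (T : SimpleGraph W) : ℝ := obsG τ.tree τ.dec T

/-- The strict partial order `≺` on decorated trees. -/
def DecLt (σ τ : DecTree) : Prop :=
  (σ.wt < τ.wt ∧ σ.n ≤ τ.n) ∨ (σ.wt = τ.wt ∧ σ.n < τ.n) ∨
    (σ.wt = τ.wt ∧ σ.n = τ.n ∧ σ.decSum < τ.decSum)

open Classical in
/-- `F_{τ+τ}(T)`: sum over pairs of embeddings with overlapping images. -/
def obsOverlapG {V W : Type*} [Fintype V] (τ : SimpleGraph V) (ℓ : V → ℕ)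
    (T : SimpleGraph W) : ℝ :=
  ∑ᶠ (φ₁ : τ ↪g T) (φ₂ : τ ↪g T),
    if (Set.range ⇑φ₁ ∩ Set.range ⇑φ₂).Nonempty then
      embWeight T ℓ ⇑φ₁ * embWeight T ℓ ⇑φ₂
    else 0

open Classical in
/-- `F_{τ,σ}(T)`: sum over pairs of embeddings with disjoint images. -/
def obsDisjG {V₁ V₂ W : Type*} [Fintype V₁] [Fintype V₂] (τ : SimpleGraph V₁) (ℓτ : V₁ → ℕ)
    (σ : SimpleGraph V₂) (ℓσ : V₂ → ℕ) (T : SimpleGraph W) : ℝ :=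
  ∑ᶠ (φ₁ : τ ↪g T) (φ₂ : σ ↪g T),
    if Disjoint (Set.range ⇑φ₁) (Set.range ⇑φ₂) then
      embWeight T ℓτ ⇑φ₁ * embWeight T ℓσ ⇑φ₂
    else 0

/-- `f ≈ g` : same order of magnitude, eventually. -/
def asympEquiv (f g : ℕ → ℝ) : Prop :=
  ∃ C : ℝ, 0 < C ∧ ∀ᶠ n in atTop, f n ≤ C * g n ∧ g n ≤ C * f n

/-- Descending factorial `[x]_l` of a real number. -/
def descPoch (x : ℝ) (l : ℕ) : ℝ := ∏ i ∈ Finset.range l, (x - (i : ℝ))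

/-- Total variation distance between two measures. -/
def tvDist {X : Type*} [MeasurableSpace X] (μ ν : Measure X) : ℝ :=
  ⨆ s : {s : Set X // MeasurableSet s}, |(μ ↑s).toReal - (ν ↑s).toReal|

open Classical in
/-- The contribution to `F_τ` of embeddings whose image meets the seed. -/
def obsMeetSeed (k m : ℕ) {r : ℕ} (τ : SimpleGraph (Fin r)) (ℓ : Fin r → ℕ)
    (T : SimpleGraph (Fin (k + m))) : ℝ :=
  ∑ᶠ φ : τ ↪g T,
    if ∃ (x : Fin r) (y : Fin k), φ x = Fin.castAdd m y then embWeight T ℓ ⇑φ else 0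

/-- The contribution to `F_τ` of embeddings contained in the seed. -/
def obsInSeed (k m : ℕ) {r : ℕ} (τ : SimpleGraph (Fin r)) (ℓ : Fin r → ℕ)
    (S : SimpleGraph (Fin k)) (T : SimpleGraph (Fin (k + m))) : ℝ :=
  ∑ᶠ φ : τ ↪g S, embWeight T ℓ fun u => Fin.castAdd m (φ u)

/-- `D_{τ,d}(T)`: the number of perfect embeddings of `(τ,d)` in `T`. -/
def perfCount {V W : Type*} (τ : SimpleGraph V) (d : V → ℕ) (T : SimpleGraph W) : ℕ :=
  Nat.card {φ : τ ↪g T // ∀ u, degR T (φ u) = d u}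

/-- `τ` is `(T₁,T₂)`-blind. -/
def IsBlind {V W₁ W₂ : Type*} (τ : SimpleGraph V) (T₁ : SimpleGraph W₁)
    (T₂ : SimpleGraph W₂) : Prop :=
  ∀ d : V → ℕ, (∀ u, 1 ≤ d u) → perfCount τ d T₁ = perfCount τ d T₂

/-- `D_{σ,τ,d}(T)`: perfect embeddings of `(τ,d)` meeting the seed exactly in `φ(A)`. -/
def perfCountSeed (k m : ℕ) {r : ℕ} (τ : SimpleGraph (Fin r)) (A : Finset (Fin r))
    (d : Fin r → ℕ) (T : SimpleGraph (Fin (k + m))) : ℕ :=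
  Nat.card {φ : τ ↪g T //
    (∀ u, degR T (φ u) = d u) ∧ ∀ u : Fin r, (∃ y : Fin k, φ u = Fin.castAdd m y) ↔ u ∈ A}

/-- The σ-algebra generated by `T_0, …, T_m`. -/
def natFilt {Ω : Type*} [MeasurableSpace Ω] {k : ℕ}
    (T : (m : ℕ) → Ω → SimpleGraph (Fin (k + m))) (m : ℕ) : MeasurableSpace Ω :=
  ⨆ j ∈ Set.Iic m, MeasurableSpace.comap (T j) inferInstance

/-- `(T_m)` is an α-PA chain started from the seed `S`, on the probability space `(Ω,P)`. -/
structure IsPAChain (α : ℝ) {k : ℕ} (S : SimpleGraph (Fin k)) {Ω : Type*} [MeasurableSpace Ω]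
    (P : Measure Ω) (T : (m : ℕ) → Ω → SimpleGraph (Fin (k + m))) : Prop where
  isProb : IsProbabilityMeasure P
  meas : ∀ m, Measurable (T m)
  init : ∀ᵐ ω ∂P, T 0 ω = S
  step : ∀ (m : ℕ) (f : SimpleGraph (Fin (k + (m + 1))) → ℝ),
    P[(fun ω => f (T (m + 1) ω))|natFilt T m] =ᵐ[P]
      fun ω => ∫ G, f G ∂stepMeasure α (T m ω)

/-- The natural filtration of the chain. -/
def natFiltration {Ω : Type*} [mΩ : MeasurableSpace Ω] {k : ℕ}
    (T : (m : ℕ) → Ω → SimpleGraph (Fin (k + m))) (hT : ∀ m, Measurable (T m)) :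
    Filtration ℕ mΩ where
  seq := natFilt T
  mono' _ _ hij := biSup_mono fun _ hx => le_trans hx hij
  le' _ := iSup_le fun l => iSup_le fun _ => (hT l).comap_le

/-- Isomorphism of simple graphs as a setoid. -/
def isoSetoid (n : ℕ) : Setoid (SimpleGraph (Fin n)) where
  r G H := Nonempty (G ≃g H)
  iseqv := ⟨fun G => ⟨RelIso.refl G.Adj⟩, fun ⟨e⟩ => ⟨e.symm⟩, fun ⟨e⟩ ⟨f⟩ => ⟨e.trans f⟩⟩

/-- Isomorphism classes of graphs on `n` vertices. -/
def IsoClass (n : ℕ) : Type := Quotient (isoSetoid n)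

instance (n : ℕ) : MeasurableSpace (IsoClass n) := ⊤

/-- The law of the isomorphism class of the α-PA tree with `n` vertices grown from `S`. -/
def isoClassLaw (α : ℝ) {k : ℕ} (S : SimpleGraph (Fin k)) (n : ℕ) : Measure (IsoClass n) :=
  if h : k ≤ n then
    (paLaw α S (n - k)).map fun G =>
      Quotient.mk (isoSetoid n) (G.map (finCongr (Nat.add_sub_cancel' h)).toEmbedding)
  else 0


/-! ### Degrees and attachment of a leaf -/

open Classical in
theorem degR_eq_sum {n : ℕ} (G : SimpleGraph (Fin n)) (v : Fin n) :
    degR G v = ∑ w, if G.Adj v w then 1 else 0 := by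
  rw [degR, Nat.card_eq_fintype_card, Fintype.card_subtype, Finset.card_filter]

theorem extend_adj_cc {n : ℕ} (G : SimpleGraph (Fin n)) (u a b : Fin n) :
    (extendTree G u).Adj a.castSucc b.castSucc ↔ G.Adj a b := by
  rw [extendTree, SimpleGraph.fromRel_adj]
  constructor
  · rintro ⟨-, (⟨a', b', h1, h2, h⟩ | ⟨-, h⟩) | (⟨a', b', h1, h2, h⟩ | ⟨-, h⟩)⟩
    · rw [Fin.castSucc_inj] at h1 h2; subst h1; subst h2; exact h
    · exact absurd h (Fin.castSucc_ne_last _)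
    · rw [Fin.castSucc_inj] at h1 h2; subst h1; subst h2; exact h.symm
    · exact absurd h (Fin.castSucc_ne_last _)
  · intro h
    exact ⟨fun e => h.ne (Fin.castSucc_injective _ e), Or.inl (Or.inl ⟨a, b, rfl, rfl, h⟩)⟩

theorem extend_adj_cl {n : ℕ} (G : SimpleGraph (Fin n)) (u a : Fin n) :
    (extendTree G u).Adj a.castSucc (Fin.last n) ↔ a = u := by
  rw [extendTree, SimpleGraph.fromRel_adj]
  constructor
  · rintro ⟨-, (⟨a', b', h1, h2, h⟩ | ⟨h, -⟩) | (⟨a', b', h1, h2, h⟩ | ⟨h, -⟩)⟩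
    · exact absurd h2.symm (Fin.castSucc_ne_last _)
    · exact Fin.castSucc_injective _ h
    · exact absurd h1.symm (Fin.castSucc_ne_last _)
    · exact absurd h.symm (Fin.castSucc_ne_last _)
  · rintro rfl
    exact ⟨Fin.castSucc_ne_last _, Or.inl (Or.inr ⟨rfl, rfl⟩)⟩

theorem degR_extend_cast {n : ℕ} (G : SimpleGraph (Fin n)) (u a : Fin n) :
    degR (extendTree G u) a.castSucc = degR G a + if a = u then 1 else 0 := by
  classical
  rw [degR_eq_sum, degR_eq_sum, Fin.sum_univ_castSucc]
  simp only [extend_adj_cc, extend_adj_cl]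

theorem degR_extend_last {n : ℕ} (G : SimpleGraph (Fin n)) (u : Fin n) :
    degR (extendTree G u) (Fin.last n) = 1 := by
  classical
  rw [degR_eq_sum, Fin.sum_univ_castSucc]
  have h : ∀ a : Fin n, (extendTree G u).Adj (Fin.last n) a.castSucc ↔ a = u := fun a => by
    rw [SimpleGraph.adj_comm, extend_adj_cl]
  simp [h]

/-- The properties of a tree on at least two vertices that the dynamics uses: there is no isolated
vertex, and the degrees sum to `2n - 2`. -/
def Good {n : ℕ} (G : SimpleGraph (Fin n)) : Prop :=
  (∀ v, 1 ≤ degR G v) ∧ ∑ v, degR G v + 2 = 2 * n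

theorem Good.extend {n : ℕ} {G : SimpleGraph (Fin n)} (h : Good G) (u : Fin n) :
    Good (extendTree G u) := by
  refine ⟨fun v => ?_, ?_⟩
  · induction v using Fin.lastCases with
    | last => rw [degR_extend_last]
    | cast v => rw [degR_extend_cast]; exact le_add_right (h.1 v)
  · rw [Fin.sum_univ_castSucc, degR_extend_last]
    simp only [degR_extend_cast, Finset.sum_add_distrib]
    have := h.2
    simp only [Finset.sum_ite_eq', Finset.mem_univ, if_true]
    omega

theorem good_of_isTree {k : ℕ} (hk : 2 ≤ k) {S : SimpleGraph (Fin k)} (hS : S.IsTree) :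
    Good S := by
  classical
  have hd : ∀ v, degR S v = S.degree v := fun v => by
    rw [degR, Nat.card_eq_fintype_card, ← SimpleGraph.card_neighborSet_eq_degree]
    rfl
  have : Nontrivial (Fin k) := Fin.nontrivial_iff_two_le.2 hk
  refine ⟨fun v => ?_, ?_⟩
  · rw [hd]
    exact hS.1.preconnected.degree_pos_of_nontrivial v
  · simp only [hd]
    rw [SimpleGraph.sum_degrees_eq_twice_card_edges]
    have := hS.card_edgeFinset
    rw [Fintype.card_fin] at this
    omega

/-! ### The law of the chain -/

instance (V : Type*) : DiscreteMeasurableSpace (SimpleGraph V) := ⟨fun _ => trivial⟩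

/-- The probability that a vertex of degree `d` is chosen in a tree with `n` vertices. -/
def attachProb (α : ℝ) (n d : ℕ) : ℝ := ((d : ℝ) - 1 + α) / ((1 + α) * (n : ℝ) - 2)

theorem denom_pos {α : ℝ} (hα : 0 < α) {n : ℕ} (hn : 2 ≤ n) : 0 < (1 + α) * (n : ℝ) - 2 := by
  have : (2 : ℝ) ≤ n := by exact_mod_cast hn
  nlinarith

theorem attachProb_nonneg {α : ℝ} (hα : 0 < α) {n : ℕ} (hn : 2 ≤ n) {d : ℕ} (hd : 1 ≤ d) :
    0 ≤ attachProb α n d := by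
  have : (1 : ℝ) ≤ d := by exact_mod_cast hd
  exact div_nonneg (by linarith) (denom_pos hα hn).le

theorem sum_attachProb {α : ℝ} (hα : 0 < α) {n : ℕ} (hn : 2 ≤ n) {G : SimpleGraph (Fin n)}
    (hG : Good G) : ∑ v, attachProb α n (degR G v) = 1 := by
  have h2 : (∑ v, (degR G v : ℝ)) + 2 = 2 * n := by exact_mod_cast hG.2
  simp only [attachProb]
  rw [← Finset.sum_div, div_eq_one_iff_eq (denom_pos hα hn).ne']
  simp only [Finset.sum_add_distrib, Finset.sum_sub_distrib, Finset.sum_const, Finset.card_univ,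
    Fintype.card_fin, nsmul_eq_mul]
  linarith

theorem stepMeasure_prob {α : ℝ} (hα : 0 < α) {n : ℕ} (hn : 2 ≤ n) {G : SimpleGraph (Fin n)}
    (hG : Good G) : IsProbabilityMeasure (stepMeasure α G) := by
  constructor
  simp only [stepMeasure, Measure.coe_finsetSum, Finset.sum_apply, Measure.smul_apply,
    measure_univ, smul_eq_mul, mul_one]
  change ∑ v, ENNReal.ofReal (attachProb α n (degR G v)) = 1
  rw [← ENNReal.ofReal_sum_of_nonneg fun v _ => attachProb_nonneg hα hn (hG.1 v),
    sum_attachProb hα hn hG, ENNReal.ofReal_one]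

theorem stepMeasure_good {α : ℝ} {n : ℕ} {G : SimpleGraph (Fin n)} (hG : Good G) :
    stepMeasure α G {H | ¬ Good H} = 0 := by
  simp only [stepMeasure, Measure.coe_finsetSum, Finset.sum_apply, Measure.smul_apply,
    smul_eq_mul]
  refine Finset.sum_eq_zero fun u _ => ?_
  rw [Measure.dirac_apply' _ (MeasurableSet.of_discrete), Set.indicator_of_notMem, mul_zero]
  exact fun h => h (hG.extend u)

theorem integral_stepMeasure {α : ℝ} (hα : 0 < α) {n : ℕ} (hn : 2 ≤ n)
    {G : SimpleGraph (Fin n)} (hG : Good G) (h : SimpleGraph (Fin (n + 1)) → ℝ) :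
    ∫ H, h H ∂stepMeasure α G = ∑ v, attachProb α n (degR G v) * h (extendTree G v) := by
  rw [stepMeasure, integral_finsetSum_measure
    fun v _ => Integrable.smul_measure Integrable.of_finite ENNReal.ofReal_ne_top]
  refine Finset.sum_congr rfl fun v _ => ?_
  rw [integral_smul_measure, integral_dirac, smul_eq_mul]
  exact congrArg (· * _) (ENNReal.toReal_ofReal (attachProb_nonneg hα hn (hG.1 v)))

theorem paLaw_prob_good {α : ℝ} (hα : 0 < α) {k : ℕ} (hk : 2 ≤ k) {S : SimpleGraph (Fin k)}
    (hS : Good S) (m : ℕ) :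
    IsProbabilityMeasure (paLaw α S m) ∧ ∀ᵐ G ∂paLaw α S m, Good G := by
  induction m with
  | zero =>
    refine ⟨Measure.dirac.isProbabilityMeasure, ?_⟩
    rw [paLaw, ae_dirac_eq]
    exact hS
  | succ m ih =>
    obtain ⟨h1, h2⟩ := ih
    refine ⟨isProbabilityMeasure_bind Measurable.of_discrete.aemeasurable ?_, ?_⟩
    · filter_upwards [h2] with G hG using stepMeasure_prob hα (by omega) hG
    · change (paLaw α S m).bind (stepMeasure α) {H | ¬ Good H} = 0
      rw [Measure.bind_apply MeasurableSet.of_discrete Measurable.of_discrete.aemeasurable,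
        lintegral_eq_zero_iff Measurable.of_discrete]
      filter_upwards [h2] with G hG using stepMeasure_good hG

/-- On finite discrete spaces, integrals against `μ.bind κ` are iterated integrals. -/
theorem integral_bind_finite {X Y : Type*} [MeasurableSpace X] [MeasurableSpace Y] [Finite X]
    [Finite Y] [DiscreteMeasurableSpace X] [DiscreteMeasurableSpace Y] (μ : Measure X)
    [IsProbabilityMeasure μ] (κ : X → Measure Y) (hκ : ∀ᵐ x ∂μ, IsProbabilityMeasure (κ x))
    (h : Y → ℝ) : ∫ y, h y ∂μ.bind κ = ∫ x, ∫ y, h y ∂κ x ∂μ := by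
  have := Fintype.ofFinite Y
  have : IsProbabilityMeasure (μ.bind κ) :=
    isProbabilityMeasure_bind Measurable.of_discrete.aemeasurable hκ
  have hx : ∀ᵐ x ∂μ, ∫ y, h y ∂κ x = ∑ y, (κ x).real {y} * h y := by
    filter_upwards [hκ] with x hx
    rw [integral_fintype Integrable.of_finite]
    rfl
  rw [integral_fintype Integrable.of_finite, integral_congr_ae hx,
    integral_finsetSum _ fun _ _ => Integrable.of_finite]
  refine Finset.sum_congr rfl fun y _ => ?_
  rw [integral_mul_const, smul_eq_mul]
  congr 1
  rw [measureReal_def, Measure.bind_apply MeasurableSet.of_discrete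
    Measurable.of_discrete.aemeasurable, ← integral_toReal Measurable.of_discrete.aemeasurable]
  · rfl
  · filter_upwards [hκ] with x hx using measure_lt_top _ _

/-! ### The degree chain -/

/-- The transition operator of the degrees `d` of `r` distinct vertices, from a tree with `n`
vertices to one with `n + 1`, acting on functions of the degrees. -/
def degStep (α : ℝ) (n : ℕ) {r : ℕ} (h : (Fin r → ℕ) → ℝ) (d : Fin r → ℕ) : ℝ :=
  h d + ∑ u, attachProb α n (d u) * (h (d + Pi.single u 1) - h d)

/-- The transition operator of the degrees from a tree with `k` vertices to one with `k + m`. -/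
def degEval (α : ℝ) (k : ℕ) {r : ℕ} : ℕ → ((Fin r → ℕ) → ℝ) → (Fin r → ℕ) → ℝ
  | 0, h => h
  | m + 1, h => degEval α k m (degStep α (k + m) h)

theorem integral_step_degrees {α : ℝ} (hα : 0 < α) {n : ℕ} (hn : 2 ≤ n)
    {G : SimpleGraph (Fin n)} (hG : Good G) {r : ℕ} (x : Fin r → Fin n)
    (hx : Function.Injective x) (h : (Fin r → ℕ) → ℝ) :
    ∫ H, h (fun u => degR H (x u).castSucc) ∂stepMeasure α G =
      degStep α n h (fun u => degR G (x u)) := by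
  classical
  rw [integral_stepMeasure hα hn hG]
  simp only [degR_extend_cast]
  set d : Fin r → ℕ := fun u => degR G (x u) with hd
  have hsplit : ∀ v : Fin n,
      attachProb α n (degR G v) * h (fun u => degR G (x u) + if x u = v then 1 else 0) =
        attachProb α n (degR G v) * h d + attachProb α n (degR G v) *
          (h (fun u => degR G (x u) + if x u = v then 1 else 0) - h d) := fun v => by ring
  rw [Finset.sum_congr rfl fun v _ => hsplit v, Finset.sum_add_distrib, ← Finset.sum_mul,
    sum_attachProb hα hn hG, one_mul, degStep]
  congr 1
  -- Attaching the leaf outside of the range of `x` leaves the degrees `d` unchanged.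
  rw [← Finset.sum_subset (Finset.subset_univ (Finset.univ.image x)),
    Finset.sum_image fun a _ b _ e => hx e]
  · refine Finset.sum_congr rfl fun w _ => ?_
    have : (fun u => degR G (x u) + if x u = x w then 1 else 0) = d + Pi.single w 1 := by
      funext u
      simp [hd, Pi.single_apply, hx.eq_iff]
    rw [this]
  · intro v _ hv
    have : (fun u => degR G (x u) + if x u = v then 1 else 0) = d := by
      funext u
      have : x u ≠ v := fun e => hv (Finset.mem_image.2 ⟨u, Finset.mem_univ _, e⟩)
      simp [hd, this]
    rw [this, sub_self, mul_zero]

/-- The expectation of a function of the degrees of distinct seed vertices depends on the seed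
only through its size and the initial degrees of these vertices. -/
theorem integral_degrees {α : ℝ} (hα : 0 < α) {k : ℕ} (hk : 2 ≤ k) {S : SimpleGraph (Fin k)}
    (hS : Good S) {r : ℕ} (x : Fin r → Fin k) (hx : Function.Injective x) (m : ℕ)
    (h : (Fin r → ℕ) → ℝ) :
    ∫ G, h (fun u => degR G (Fin.castAdd m (x u))) ∂paLaw α S m =
      degEval α k m h (fun u => degR S (x u)) := by
  induction m generalizing h with
  | zero =>
    rw [paLaw, integral_dirac]
    rfl
  | succ m ih =>
    obtain ⟨h1, h2⟩ := paLaw_prob_good hα hk hS m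
    rw [degEval, ← ih, paLaw]
    rw [integral_bind_finite]
    · refine integral_congr_ae ?_
      filter_upwards [h2] with G hG
      exact integral_step_degrees hα (by omega) hG (fun u => Fin.castAdd m (x u))
        ((Fin.castAdd_injective k m).comp hx) h
    · filter_upwards [h2] with G hG using stepMeasure_prob hα (by omega) hG

/-- The weight `∏ [d u - 1]_{ℓ u}` as a function of the degrees. -/
def degWeight {r : ℕ} (ℓ d : Fin r → ℕ) : ℝ := ∏ u, ((d u - 1).descFactorial (ℓ u) : ℝ)

/-! ### Grouping embeddings by degrees -/

/-- A sum over embeddings of a function of the degrees of the image, grouped by these degrees; only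
positive degrees occur since a `Good` graph has no isolated vertex. -/
theorem sum_group_degrees {k r : ℕ} {S : SimpleGraph (Fin k)} (hS : Good S)
    (τ : SimpleGraph (Fin r)) [Fintype (τ ↪g S)] (g : (Fin r → ℕ) → ℝ)
    [∀ d : Fin r → ℕ, Decidable (∀ u, 1 ≤ d u)] :
    ∑ φ : τ ↪g S, g (fun u => degR S (φ u)) =
      ∑ᶠ d : Fin r → ℕ, if ∀ u, 1 ≤ d u then g d * (perfCount τ d S : ℝ) else 0 := by
  classical
  have hc : ∀ d, perfCount τ d S =
      (Finset.univ.filter fun φ : τ ↪g S => (fun u => degR S (φ u)) = d).card := fun d => by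
    rw [perfCount, Nat.card_eq_fintype_card, Fintype.card_subtype]
    simp only [funext_iff]
  rw [finsum_eq_sum_of_support_subset (s := Finset.univ.image
    fun (φ : τ ↪g S) u => degR S (φ u)), Finset.sum_comp]
  · refine Finset.sum_congr rfl fun d hd => ?_
    obtain ⟨φ, -, rfl⟩ := Finset.mem_image.1 hd
    rw [if_pos fun u => hS.1 _, hc, nsmul_eq_mul, mul_comm]
  · intro d hd
    rw [Function.mem_support] at hd
    have h0 : perfCount τ d S ≠ 0 := fun e => hd (by simp [e])
    rw [hc] at h0
    obtain ⟨φ, hφ⟩ := Finset.card_ne_zero.1 h0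
    exact Finset.mem_coe.2 (Finset.mem_image.2 ⟨φ, Finset.mem_univ _, (Finset.mem_filter.1 hφ).2⟩)

open Classical in
/-- **Lemma 4.7.** For every `α > 0` and every finite tree `τ` there is a
family of nonnegative reals `f(k,n;d,ℓ)`, not depending on the structure of the seed, such
that for every seed `S` of size `k ≥ 2`, every decoration `ℓ` and every `n = k + m ≥ k`:
`E[F_τ(T_n^S, {·} ⊆ S)] = Σ_{d : V_τ → ℕ_{>0}} f(k,n;d,ℓ)·D_{τ,d}(S)`. -/
theorem observable_in_seed_factorization (α : ℝ) (hα : 0 < α)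
    (r : ℕ) (τ : SimpleGraph (Fin r)) (hτ : τ.IsTree) :
    ∃ f : ℕ → ℕ → (Fin r → ℕ) → (Fin r → ℕ) → ℝ,
      (∀ k n d ℓ, 0 ≤ f k n d ℓ) ∧
      ∀ (k : ℕ), 2 ≤ k → ∀ (S : SimpleGraph (Fin k)), S.IsTree →
        ∀ (ℓ : Fin r → ℕ) (m : ℕ),
          (∫ G, obsInSeed k m τ ℓ S G ∂paLaw α S m) =
            ∑ᶠ d : Fin r → ℕ,
              if ∀ u, 1 ≤ d u then f k (k + m) d ℓ * (perfCount τ d S : ℝ) else 0 := by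
  refine ⟨fun k n d ℓ => |degEval α k (n - k) (degWeight ℓ) d|, fun _ _ _ _ => abs_nonneg _, ?_⟩
  intro k hk S hS ℓ m
  have hG := good_of_isTree hk hS
  have : Finite (τ ↪g S) := Finite.of_injective _ DFunLike.coe_injective
  have : Fintype (τ ↪g S) := Fintype.ofFinite _
  obtain ⟨h1, -⟩ := paLaw_prob_good hα hk hG m
  rw [← sum_group_degrees hG τ (fun d => |degEval α k (k + m - k) (degWeight ℓ) d|),
    Nat.add_sub_cancel_left]
  simp only [obsInSeed, finsum_eq_sum_of_fintype]
  rw [integral_finsetSum _ fun _ _ => Integrable.of_finite]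
  refine Finset.sum_congr rfl fun φ _ => ?_
  -- The value of `degEval` is an expectation of a nonnegative variable, so `|·|` can be dropped.
  rw [← integral_degrees hα hk hG φ φ.injective m, abs_of_nonneg]
  · rfl
  · exact integral_nonneg fun G => Finset.prod_nonneg fun u _ => Nat.cast_nonneg _

end AffinePA
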